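/- Let V = ℝ[k₀,0] ⊕ ⊕_{μ∈ℳ} ℝ[k_μ,μ] be a finite-dimensional orthogonal torus representation. Then the element χ_𝕋(S^V) is invertible in the Euler ring U(𝕋) and its inverse satisfies χ_𝕋(S^V)^{−1} = (−1)^{k₀} ( 𝕀 + Σ_{μ∈ℳ} k_μ χ_𝕋(𝕋/H_μ⁺) ) + 𝒪, where 𝒪 is a ℤ-linear combination of elements χ_𝕋(𝕋/H⁺) with dim H ≤ dim 𝕋 − 2. -/

import Mathlib

/-!
STATEMENT 4 (invertibility of `χ_𝕋(S^V)` in `U(𝕋)` and the formula for its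
inverse, equation (2.4) of the paper).

The Euler ring `U(𝕋)` of the torus `𝕋` is modelled as the free ℤ-module
`Sub →₀ ℤ` on the closed subgroups of `𝕋` (the generator corresponding to `H` is
`Finsupp.single H 1 = χ_𝕋(𝕋/H⁺)`), with multiplication `eulerMul` determined by
`χ_𝕋(𝕋/H⁺) ⋆ χ_𝕋(𝕋/H'⁺) = χ_𝕋(𝕋/(H∩H')⁺)` if
`dim H + dim H' = dim 𝕋 + dim (H∩H')` and `Θ = 0` otherwise; the unit is
`𝕀 = χ_𝕋(𝕋/𝕋⁺) = Finsupp.single top 1`.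

A finite-dimensional orthogonal `𝕋`-representation
`V = ℝ[k₀,0] ⊕ ⊕_{μ∈ℳ} ℝ[k_μ,μ]` is recorded by its multiplicities
`(k₀, k) : ℕ × (Mw →₀ ℕ)`; `chiS k₀ k` denotes `χ_𝕋(S^V)`, characterized by the
hypotheses below (direct-sum multiplicativity and the values on `ℝ[1,0]` and
`ℝ[1,μ]`), from which one also has
`χ_𝕋(S^V) = (−1)^{k₀}(𝕀 − Σ_{μ∈ℳ} k_μ χ_𝕋(𝕋/H_μ⁺)) + 𝒪`.

Conclusion: `χ_𝕋(S^V)` is invertible in `U(𝕋)` and its inverse satisfies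
`χ_𝕋(S^V)⁻¹ = (−1)^{k₀} (𝕀 + Σ_{μ∈ℳ} k_μ χ_𝕋(𝕋/H_μ⁺)) + 𝒪`, with `𝒪` a
ℤ-linear combination of generators `χ_𝕋(𝕋/H⁺)` with `dim H ≤ dim 𝕋 − 2`.
-/

/-- The Euler-ring multiplication of a torus on the free ℤ-module on the set of
closed subgroups. -/
noncomputable def eulerMul {Sub : Type*} (dimT : ℕ) (dim : Sub → ℕ)
    (inter : Sub → Sub → Sub) (x y : Sub →₀ ℤ) : Sub →₀ ℤ :=
  x.sum fun H a => y.sum fun K b =>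
    if dim H + dim K = dimT + dim (inter H K)
    then Finsupp.single (inter H K) (a * b) else 0

/-- `lowDim dimT dim y` : `y` is a ℤ-linear combination of generators
`χ_𝕋(𝕋/H⁺)` with `dim H ≤ dim 𝕋 − 2`. -/
def lowDim {Sub : Type*} (dimT : ℕ) (dim : Sub → ℕ) (y : Sub →₀ ℤ) : Prop :=
  ∀ H ∈ y.support, dim H + 2 ≤ dimT

/-- `eulerMul` as a bilinear map. -/
noncomputable def eulerB {Sub : Type*} (dimT : ℕ) (dim : Sub → ℕ)
    (inter : Sub → Sub → Sub) : (Sub →₀ ℤ) →ₗ[ℤ] (Sub →₀ ℤ) →ₗ[ℤ] (Sub →₀ ℤ) :=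
  Finsupp.lsum ℤ fun H => LinearMap.toSpanSingleton ℤ _
    (Finsupp.lsum ℤ fun K =>
      if dim H + dim K = dimT + dim (inter H K) then Finsupp.lsingle (inter H K) else 0)

theorem eulerB_apply {Sub : Type*} (dimT : ℕ) (dim : Sub → ℕ)
    (inter : Sub → Sub → Sub) (x y : Sub →₀ ℤ) :
    eulerB dimT dim inter x y = eulerMul dimT dim inter x y := by
  classical
  unfold eulerB eulerMul
  rw [Finsupp.lsum_apply, Finsupp.sum, LinearMap.sum_apply, Finsupp.sum]
  refine Finset.sum_congr rfl fun H _ => ?_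
  rw [LinearMap.toSpanSingleton_apply, LinearMap.smul_apply, Finsupp.lsum_apply, Finsupp.smul_sum]
  refine Finset.sum_congr rfl fun K _ => ?_
  dsimp only
  split_ifs <;> simp

/-- codimension filtration -/
def filt {Sub : Type*} (dimT : ℕ) (dim : Sub → ℕ) (j : ℕ) : Submodule ℤ (Sub →₀ ℤ) :=
  Finsupp.supported ℤ ℤ {H | dim H + j ≤ dimT}

theorem filt_anti {Sub : Type*} (dimT : ℕ) (dim : Sub → ℕ) {i j : ℕ} (h : i ≤ j) :
    filt dimT dim j ≤ filt dimT dim i := by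
  apply Finsupp.supported_mono
  intro H hH
  simp only [Set.mem_ofPred_eq] at *
  omega

theorem filt_mul {Sub : Type*} (dimT : ℕ) (dim : Sub → ℕ)
    (inter : Sub → Sub → Sub) {i j : ℕ} {x y : Sub →₀ ℤ}
    (hx : x ∈ filt dimT dim i) (hy : y ∈ filt dimT dim j) :
    eulerB dimT dim inter x y ∈ filt dimT dim (i + j) := by
  rw [eulerB_apply]
  unfold eulerMul
  refine Submodule.sum_mem _ fun H hH => Submodule.sum_mem _ fun K hK => ?_
  have h1 : dim H + i ≤ dimT := (Finsupp.mem_supported ℤ x).1 hx hH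
  have h2 : dim K + j ≤ dimT := (Finsupp.mem_supported ℤ y).1 hy hK
  dsimp only
  split_ifs with h
  · apply Finsupp.single_mem_supported
    simp only [Set.mem_ofPred_eq]
    omega
  · exact Submodule.zero_mem _

theorem eulerB_one {Sub : Type*} (dimT : ℕ) (dim : Sub → ℕ)
    (inter : Sub → Sub → Sub) (top : Sub) (hdimtop : dim top = dimT)
    (hinter_top : ∀ H, inter top H = H) (x : Sub →₀ ℤ) :
    eulerB dimT dim inter (Finsupp.single top 1) x = x := by
  rw [eulerB_apply]
  unfold eulerMul
  simp [hinter_top, hdimtop, add_comm, -Finsupp.single_mul]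

theorem eulerB_one' {Sub : Type*} (dimT : ℕ) (dim : Sub → ℕ)
    (inter : Sub → Sub → Sub) (top : Sub) (hdimtop : dim top = dimT)
    (hinter_top : ∀ H, inter H top = H) (x : Sub →₀ ℤ) :
    eulerB dimT dim inter x (Finsupp.single top 1) = x := by
  rw [eulerB_apply]
  unfold eulerMul
  simp [hinter_top, hdimtop, add_comm, -Finsupp.single_mul]

theorem statement4
    -- the closed subgroups of the torus 𝕋, their dimensions and intersections
    (Sub : Type*) (dimT : ℕ) (dim : Sub → ℕ) (hdim : ∀ H, dim H ≤ dimT)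
    (inter : Sub → Sub → Sub)
    (top : Sub) (hdimtop : dim top = dimT)
    (hinter_top : ∀ H, inter top H = H) (hinter_top' : ∀ H, inter H top = H)
    -- ℳ: the chosen set of nonzero weights (one of each pair ±μ)
    (Mw : Type*)
    -- μ ↦ H_μ = {exp(φ) : μ(φ) ∈ 2πℤ}, the codimension-one isotropy subgroups
    (Hsub : Mw → Sub)
    (hHsub : ∀ μ, dim (Hsub μ) + 1 = dimT)
    (hHsubInj : Function.Injective Hsub)
    -- χ_𝕋(S^V) as a function of the multiplicities (k₀, k) of V
    (chiS : ℕ → (Mw →₀ ℕ) → (Sub →₀ ℤ))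
    -- χ of the zero representation is the unit 𝕀
    (hchi_zero : chiS 0 0 = Finsupp.single top 1)
    -- multiplicativity: χ_𝕋(S^{V ⊕ W}) = χ_𝕋(S^V) ⋆ χ_𝕋(S^W)
    (hchi_mul : ∀ (k₀ l₀ : ℕ) (k l : Mw →₀ ℕ),
      chiS (k₀ + l₀) (k + l) = eulerMul dimT dim inter (chiS k₀ k) (chiS l₀ l))
    -- χ_𝕋(S^{ℝ[1,0]}) = −𝕀
    (hchi_triv : chiS 1 0 = -Finsupp.single top 1)
    -- χ_𝕋(S^{ℝ[1,μ]}) = 𝕀 − χ_𝕋(𝕋/H_μ⁺)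
    (hchi_rot : ∀ μ : Mw, chiS 0 (Finsupp.single μ 1)
      = Finsupp.single top 1 - Finsupp.single (Hsub μ) 1) :
    ∀ (k₀ : ℕ) (k : Mw →₀ ℕ), ∃ y O : Sub →₀ ℤ,
      eulerMul dimT dim inter (chiS k₀ k) y = Finsupp.single top 1 ∧
      eulerMul dimT dim inter y (chiS k₀ k) = Finsupp.single top 1 ∧
      lowDim dimT dim O ∧
      y = (-1 : ℤ) ^ k₀ •
        (Finsupp.single top 1
          + k.sum fun μ n => (n : ℤ) • Finsupp.single (Hsub μ) 1) + O := by
  have hB := eulerB_apply dimT dim inter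
  set B := eulerB dimT dim inter with hBdef
  set e : Sub →₀ ℤ := Finsupp.single top 1 with he
  have h1l : ∀ x, B e x = x := eulerB_one dimT dim inter top hdimtop hinter_top
  have h1r : ∀ x, B x e = x := eulerB_one' dimT dim inter top hdimtop hinter_top'
  have hmul : ∀ {i j : ℕ} {x y : Sub →₀ ℤ}, x ∈ filt dimT dim i → y ∈ filt dimT dim j →
    B x y ∈ filt dimT dim (i + j) := fun hx hy => filt_mul dimT dim inter hx hy
  simp only [← hB] at hchi_mul ⊢
  let s : (Mw →₀ ℕ) → (Sub →₀ ℤ) := fun k =>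
    k.sum fun μ n => (n : ℤ) • Finsupp.single (Hsub μ) 1
  have hs0 : s 0 = 0 := Finsupp.sum_zero_index
  have hsadd : ∀ k l, s (k + l) = s k + s l := fun k l => by
    classical
    refine Finsupp.sum_add_index' (fun _ => by simp) (fun a b c => ?_)
    push_cast
    rw [add_smul]
  have hs1 : ∀ μ, s (Finsupp.single μ 1) = Finsupp.single (Hsub μ) 1 := fun μ => by
    simp [s]
  have hsF : ∀ k, s k ∈ filt dimT dim 1 := fun k => by
    refine Submodule.sum_mem _ fun μ _ => Submodule.smul_mem _ _ ?_
    exact Finsupp.single_mem_supported _ _ (hHsub μ).le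
  have hF0 : ∀ x, x ∈ filt dimT dim 0 := fun x => by
    rw [filt, Finsupp.mem_supported]
    intro H _
    exact hdim H
  -- the expansion of chiS
  let P : ℕ → (Mw →₀ ℕ) → Prop := fun k₀ k =>
    ∃ O ∈ filt dimT dim 2, chiS k₀ k = (-1 : ℤ) ^ k₀ • (e - s k + O)
  have hP00 : P 0 0 := ⟨0, Submodule.zero_mem _, by simp [hs0, hchi_zero]⟩
  have hP10 : P 1 0 := ⟨0, Submodule.zero_mem _, by simp [hs0, hchi_triv]⟩
  have hP01 : ∀ μ, P 0 (Finsupp.single μ 1) := fun μ =>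
    ⟨0, Submodule.zero_mem _, by simp [hs1, hchi_rot]⟩
  have hPadd : ∀ k₀ l₀ k l, P k₀ k → P l₀ l → P (k₀ + l₀) (k + l) := by
    rintro k₀ l₀ k l ⟨O, hO, hk⟩ ⟨O', hO', hl⟩
    refine ⟨O + O' + B (s k) (s l) - B (s k) O' - B O (s l) + B O O', ?_, ?_⟩
    · have a1 : B (s k) (s l) ∈ filt dimT dim 2 := hmul (hsF k) (hsF l)
      have a2 : B (s k) O' ∈ filt dimT dim 2 := by simpa using hmul (hF0 (s k)) hO'
      have a3 : B O (s l) ∈ filt dimT dim 2 := by simpa using hmul hO (hF0 (s l))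
      have a4 : B O O' ∈ filt dimT dim 2 := by simpa using hmul hO (hF0 O')
      exact add_mem (sub_mem (sub_mem (add_mem (add_mem hO hO') a1) a2) a3) a4
    · rw [hchi_mul, hk, hl, hsadd, map_smul, map_smul, LinearMap.smul_apply, smul_smul, pow_add,
        mul_comm]
      congr 1
      simp only [map_add, map_sub, LinearMap.add_apply, LinearMap.sub_apply, h1l, h1r]
      abel
  have hPk : ∀ k, P 0 k := by
    intro k
    induction k using Finsupp.induction_linear with
    | zero => exact hP00
    | add k l hk hl => exact hPadd 0 0 k l hk hl
    | single μ n =>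
      induction n with
      | zero => simpa using hP00
      | succ n ih =>
        rw [Finsupp.single_add]
        exact hPadd 0 0 _ _ ih (hP01 μ)
  have hPk0 : ∀ k₀, P k₀ 0 := by
    intro k₀
    induction k₀ with
    | zero => exact hP00
    | succ n ih => simpa using hPadd n 1 0 0 ih hP10
  intro k₀ k
  obtain ⟨O, hO, hc⟩ : P k₀ k := by simpa using hPadd k₀ 0 0 k (hPk0 k₀) (hPk k)
  set c := chiS k₀ k with hcdef
  have hee : (-1 : ℤ) ^ k₀ * (-1 : ℤ) ^ k₀ = 1 := by
    rw [← mul_pow]; simp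
  set ε : ℤ := (-1 : ℤ) ^ k₀ with hε
  -- the nilpotent part
  set n : Sub →₀ ℤ := s k - O with hn
  have hnF : n ∈ filt dimT dim 1 := sub_mem (hsF k) (filt_anti dimT dim (by norm_num) hO)
  have hcn : c = ε • (e - n) := by rw [hc, hn]; congr 1; abel
  have hnc : n = e - ε • c := by rw [hcn, smul_smul, hee, one_smul]; abel
  let L : Module.End ℤ (Sub →₀ ℤ) := B n
  have hLF : ∀ i, (L ^ i) e ∈ filt dimT dim i := by
    intro i
    induction i with
    | zero => exact hF0 _
    | succ i ih =>
      rw [pow_succ', Module.End.mul_apply, add_comm]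
      exact hmul hnF ih
  let S : Submodule ℤ (Sub →₀ ℤ) := Submodule.span ℤ {x | ∃ l₀ l, x = chiS l₀ l}
  have hSmem : ∀ x ∈ S, B c x ∈ S ∧ B c x = B x c := by
    intro x hx
    induction hx using Submodule.span_induction with
    | mem x hx =>
      obtain ⟨l₀, l, rfl⟩ := hx
      rw [hcdef, ← hchi_mul, ← hchi_mul]
      exact ⟨Submodule.subset_span ⟨_, _, rfl⟩, by rw [add_comm k₀, add_comm k]⟩
    | zero => simp
    | add x y _ _ hx hy =>
      rw [map_add, map_add, LinearMap.add_apply, hx.2, hy.2]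
      exact ⟨add_mem (hx.2 ▸ hx.1) (hy.2 ▸ hy.1), rfl⟩
    | smul a x _ hx =>
      rw [map_smul, map_smul, LinearMap.smul_apply, ← hx.2]
      exact ⟨Submodule.smul_mem _ _ hx.1, rfl⟩
  have heS : e ∈ S := Submodule.subset_span ⟨0, 0, hchi_zero.symm⟩
  have hLS : ∀ i, (L ^ i) e ∈ S := by
    intro i
    induction i with
    | zero => exact heS
    | succ i ih =>
      rw [pow_succ', Module.End.mul_apply]
      have : L ((L ^ i) e) = (L ^ i) e - ε • B c ((L ^ i) e) := by
        change B n _ = _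
        rw [hnc, map_sub, map_smul, LinearMap.sub_apply, LinearMap.smul_apply, h1l]
      rw [this]
      exact sub_mem ih (Submodule.smul_mem _ _ (hSmem _ ih).1)
  let y : Sub →₀ ℤ := ε • ∑ i ∈ Finset.range (dimT + 2), (L ^ i) e
  have hyS : y ∈ S := Submodule.smul_mem _ _ (Submodule.sum_mem _ fun i _ => hLS i)
  have hcy : B c y = e := by
    have h0 : (L ^ (dimT + 2)) e = 0 := by
      have := hLF (dimT + 2)
      rw [filt, Finsupp.mem_supported] at this
      rw [← Finsupp.support_eq_empty, Finset.eq_empty_iff_forall_notMem]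
      intro H hH
      have := this hH
      simp only [Set.mem_ofPred_eq] at this
      omega
    have hg := congrArg (fun f : Module.End ℤ (Sub →₀ ℤ) => f e)
      (mul_neg_geom_sum L (dimT + 2))
    simp only [Module.End.mul_apply, LinearMap.sub_apply, Module.End.one_apply, h0, sub_zero,
      LinearMap.sum_apply] at hg
    rw [hcn, map_smul, map_smul, LinearMap.smul_apply, smul_smul, hee, one_smul, map_sub,
      LinearMap.sub_apply, h1l]
    exact hg
  refine ⟨y, ε • (∑ i ∈ Finset.range dimT, (L ^ (i + 2)) e - O), hcy, ?_, ?_, ?_⟩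
  · rw [← (hSmem y hyS).2, hcy]
  · have : ε • (∑ i ∈ Finset.range dimT, (L ^ (i + 2)) e - O) ∈ filt dimT dim 2 :=
      Submodule.smul_mem _ _ (sub_mem (Submodule.sum_mem _ fun i _ =>
        filt_anti dimT dim (by omega) (hLF (i + 2))) hO)
    exact fun H hH => (Finsupp.mem_supported ℤ _).1 this hH
  · change ε • _ = ε • (e + s k) + _
    rw [← smul_add, Finset.sum_range_succ', Finset.sum_range_succ']
    congr 1
    have : (L ^ (0 + 1)) e = n := by
      simp only [zero_add, pow_one]
      exact h1r n
    rw [this, pow_zero, Module.End.one_apply, hn]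
    abel
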